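/- Let X and Y be compact metric spaces. (i) Let c : X × P(Y) → (−∞,+∞] be bounded below and lower semicontinuous, with σ ↦ c(x,σ) proper and convex for each x, and set V_c(μ,ν) := inf{ ∫_X c(x,π_x) dμ : π coupling of μ and ν }. Then for every μ ∈ P(X) and g ∈ C(Y): sup_{ν∈P(Y)} { ∫_Y g dν − V_c(μ,ν) } = ∫_X T⁻g dμ, where T⁻g(x) := sup_{σ∈P(Y)} { ∫_Y g dσ − c(x,σ) }. (ii) Conversely, if 𝒯 is a standard backward linear transfer on P(X) × P(Y), then for all (μ,ν): 𝒯(μ,ν) = inf{ ∫_X 𝒯(δ_x, π_x) dμ(x) : π coupling of μ and ν }, and whenever 𝒯(μ,ν) < +∞ the infimum is attained: there is a coupling π of μ and ν whose disintegration satisfies 𝒯(δ_x, π_x) < +∞ for μ-a.e. x and 𝒯(μ,ν) = ∫_X 𝒯(δ_x, π_x) dμ(x). -/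

import Mathlib

open MeasureTheory Topology Filter Set
open scoped ENNReal NNReal

noncomputable section

/-- The positive part of an extended real number, as an element of `ℝ≥0∞`. -/
def epos (a : EReal) : ℝ≥0∞ := if a = ⊤ then ⊤ else ENNReal.ofReal a.toReal

/-- Signed integral of an `EReal`-valued function (the natural value when `f` is
bounded above or bounded below). -/
def eint {α : Type*} [MeasurableSpace α] (μ : Measure α) (f : α → EReal) : EReal :=
  ((∫⁻ x, epos (f x) ∂μ : ℝ≥0∞) : EReal) - ((∫⁻ x, epos (-(f x)) ∂μ : ℝ≥0∞) : EReal)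

/-- The Dirac measure at a point, as a probability measure. -/
def diracP {α : Type*} [MeasurableSpace α] (x : α) : ProbabilityMeasure α :=
  ⟨Measure.dirac x, inferInstance⟩

/-- The operator `Tg(x) = sup_{σ ∈ P(Y)} { ∫ g dσ − c(x,σ) }` associated to a cost
`c : X × P(Y) → (−∞,∞]`. -/
def costOp {X Y : Type*} [TopologicalSpace Y] [MeasurableSpace Y]
    (c : X → ProbabilityMeasure Y → EReal) (g : C(Y, ℝ)) (x : X) : EReal :=
  ⨆ σ : ProbabilityMeasure Y, (((∫ y, g y ∂(σ : Measure Y)) : ℝ) : EReal) - c x σ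

/-- `π` is a coupling (transport plan) of `μ` and `ν`. -/
def IsCoupling {X Y : Type*} [MeasurableSpace X] [MeasurableSpace Y]
    (π : ProbabilityMeasure (X × Y)) (μ : ProbabilityMeasure X)
    (ν : ProbabilityMeasure Y) : Prop :=
  (π : Measure (X × Y)).map Prod.fst = (μ : Measure X) ∧
  (π : Measure (X × Y)).map Prod.snd = (ν : Measure Y)

/-- `κ` is a disintegration of the plan `π` with respect to `μ`. -/
def IsDisintegration {X Y : Type*} [MeasurableSpace X] [MeasurableSpace Y]
    (π : ProbabilityMeasure (X × Y)) (μ : ProbabilityMeasure X)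
    (κ : X → ProbabilityMeasure Y) : Prop :=
  Measurable (fun x => (κ x : Measure Y)) ∧
  ∀ (A : Set X) (B : Set Y), MeasurableSet A → MeasurableSet B →
    (π : Measure (X × Y)) (A ×ˢ B) = ∫⁻ x in A, (κ x : Measure Y) B ∂(μ : Measure X)

/-- The cost `π ↦ ∫_X c(x, π_x) dμ(x)` of a transport plan, computed through its
(essentially unique) disintegration with respect to `μ`. -/
def planCost {X Y : Type*} [MeasurableSpace X] [MeasurableSpace Y]
    (μ : ProbabilityMeasure X) (c : X → ProbabilityMeasure Y → EReal)
    (π : ProbabilityMeasure (X × Y)) : EReal :=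
  ⨅ κ ∈ {κ : X → ProbabilityMeasure Y | IsDisintegration π μ κ},
    eint (μ : Measure X) (fun x => c x (κ x))

/-- The optimal weak transport cost `V_c(μ,ν)`. -/
def weakTransport {X Y : Type*} [MeasurableSpace X] [MeasurableSpace Y]
    (c : X → ProbabilityMeasure Y → EReal)
    (μ : ProbabilityMeasure X) (ν : ProbabilityMeasure Y) : EReal :=
  ⨅ π ∈ {π : ProbabilityMeasure (X × Y) | IsCoupling π μ ν}, planCost μ c π

/-- The backward Kantorovich operator of a transfer functional `𝒯`, on continuous
functions: `T⁻g(x) = sup_{σ ∈ P(Y)} { ∫ g dσ − 𝒯(δ_x, σ) }`. -/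
def TopC {X Y : Type*} [MeasurableSpace X] [TopologicalSpace Y] [MeasurableSpace Y]
    (𝒯 : ProbabilityMeasure X → ProbabilityMeasure Y → EReal)
    (g : C(Y, ℝ)) (x : X) : EReal :=
  ⨆ σ : ProbabilityMeasure Y, (((∫ y, g y ∂(σ : Measure Y)) : ℝ) : EReal) - 𝒯 (diracP x) σ

/-- The backward Kantorovich operator of a transfer functional `𝒯`, extended to
extended-real-valued functions. -/
def TopU {X Y : Type*} [MeasurableSpace X] [MeasurableSpace Y]
    (𝒯 : ProbabilityMeasure X → ProbabilityMeasure Y → EReal)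
    (g : Y → EReal) (x : X) : EReal :=
  ⨆ σ : ProbabilityMeasure Y, eint (σ : Measure Y) g - 𝒯 (diracP x) σ

/-- A backward linear transfer: a proper, bounded below, jointly convex,
weak*-lower semicontinuous functional on `P(X) × P(Y)` with values in `ℝ ∪ {+∞}`,
such that the Legendre transform of each partial map `𝒯(μ,·)` is given by
integrating the backward Kantorovich operator against `μ`. -/
def IsBLT {X Y : Type*} [TopologicalSpace X] [MeasurableSpace X] [OpensMeasurableSpace X]
    [TopologicalSpace Y] [MeasurableSpace Y] [OpensMeasurableSpace Y]
    (𝒯 : ProbabilityMeasure X → ProbabilityMeasure Y → EReal) : Prop :=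
  (∀ μ ν, 𝒯 μ ν ≠ ⊥) ∧
  (∃ μ ν, 𝒯 μ ν ≠ ⊤) ∧
  (∃ m : ℝ, ∀ μ ν, (m : EReal) ≤ 𝒯 μ ν) ∧
  (∀ (μ₁ μ₂ : ProbabilityMeasure X) (ν₁ ν₂ : ProbabilityMeasure Y)
      (μ : ProbabilityMeasure X) (ν : ProbabilityMeasure Y) (a b : ℝ≥0),
      a + b = 1 →
      (μ : Measure X) = a • (μ₁ : Measure X) + b • (μ₂ : Measure X) →
      (ν : Measure Y) = a • (ν₁ : Measure Y) + b • (ν₂ : Measure Y) →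
      𝒯 μ ν ≤ ((a : ℝ) : EReal) * 𝒯 μ₁ ν₁ + ((b : ℝ) : EReal) * 𝒯 μ₂ ν₂) ∧
  LowerSemicontinuous (fun p : ProbabilityMeasure X × ProbabilityMeasure Y => 𝒯 p.1 p.2) ∧
  (∀ (μ : ProbabilityMeasure X) (g : C(Y, ℝ)),
      (⨆ σ : ProbabilityMeasure Y,
        (((∫ y, g y ∂(σ : Measure Y)) : ℝ) : EReal) - 𝒯 μ σ)
        = eint (μ : Measure X) (TopC 𝒯 g))

/-- A transfer is standard if every Dirac measure admits a finite-cost target. -/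
def IsStandardT {X Y : Type*} [MeasurableSpace X] [MeasurableSpace Y]
    (𝒯 : ProbabilityMeasure X → ProbabilityMeasure Y → EReal) : Prop :=
  ∀ x : X, ∃ σ : ProbabilityMeasure Y, 𝒯 (diracP x) σ ≠ ⊤

open ProbabilityTheory

/-!
Part (i): `σ ↦ c x σ - ∫ g dσ` attains its minimum over the compact space `P(Y)` at a point that
can be chosen measurably in `x`, so the infimum commutes with integration in `x`.

Part (ii): by part (i), `𝒯 μ` and `V_c(μ, ·)`, for the cost `c x σ = 𝒯 (δ_x) σ`, have the same
Legendre transform, so by Hahn–Banach they agree as soon as both are convex and lower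
semicontinuous. For `V_c` this is seen by relaxing it to an infimum over laws on `X × P(Y)` with
first marginal `μ` and second marginal of barycenter `ν`. The relaxed problem is linear over a
compact set, hence convex, lower semicontinuous and attained; and replacing the conditional law
at `x` by its barycenter does not increase the cost, by Jensen's inequality, so the relaxation
is `V_c` itself.
-/

section Integral

variable {α β : Type*} [MeasurableSpace α] [MeasurableSpace β] {μ : Measure α}

theorem toENNReal_add_eq_add_toENNReal_neg {a : EReal} {p n : ℝ≥0∞} (h : a + n = p) :
    a.toENNReal + n = p + (-a).toENNReal := by
  induction a with
  | bot => exact absurd (EReal.bot_add _ ▸ h).symm (EReal.coe_ennreal_ne_bot p)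
  | top =>
    have hp : p = ⊤ := by simpa using h.symm
    simp [hp]
  | coe a =>
    rcases eq_or_ne n ⊤ with rfl | hn
    · have hp : p = ⊤ := by simpa using h.symm
      simp [hp]
    lift n to ℝ≥0 using hn
    lift p to ℝ≥0 using by rintro rfl; exact absurd h (EReal.coe_ne_top (a + n))
    have hp : (p : ℝ) = a + n := (EReal.coe_injective h).symm
    rw [← EReal.coe_neg, EReal.toENNReal_of_ne_top (EReal.coe_ne_top _),
      EReal.toENNReal_of_ne_top (EReal.coe_ne_top _), EReal.toReal_coe, EReal.toReal_coe]
    unfold ENNReal.ofReal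
    norm_cast
    ext
    push_cast
    rw [hp, Real.coe_toNNReal', Real.coe_toNNReal', add_right_comm, ← sub_eq_iff_eq_add]
    linarith [max_zero_sub_max_neg_zero_eq_self a]

theorem toENNReal_neg_le {a : EReal} {p n : ℝ≥0∞} (h : a + n = p) : (-a).toENNReal ≤ n := by
  rw [← EReal.toENNReal_coe (x := n)]
  refine EReal.toENNReal_le_toENNReal ?_
  rw [EReal.neg_le, ← zero_sub]
  exact EReal.sub_le_of_le_add (h ▸ EReal.coe_ennreal_nonneg p)

theorem eint_add_lintegral {f : α → EReal} {p n : α → ℝ≥0∞} (hp : Measurable p)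
    (hn : Measurable n) (hn_fin : ∫⁻ x, n x ∂μ ≠ ∞) (h : ∀ x, f x + n x = p x) :
    eint μ f + (∫⁻ x, n x ∂μ : ℝ≥0∞) = (∫⁻ x, p x ∂μ : ℝ≥0∞) := by
  have h_int : ∫⁻ x, epos (f x) ∂μ + ∫⁻ x, n x ∂μ = ∫⁻ x, p x ∂μ + ∫⁻ x, epos (-f x) ∂μ := by
    rw [← lintegral_add_right _ hn, ← lintegral_add_left hp]
    exact lintegral_congr fun x => toENNReal_add_eq_add_toENNReal_neg (h x)
  have h_neg : ∫⁻ x, epos (-f x) ∂μ ≠ ∞ :=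
    ne_top_of_le_ne_top hn_fin (lintegral_mono fun x => toENNReal_neg_le (h x))
  unfold eint
  generalize ∫⁻ x, epos (-f x) ∂μ = b at *
  rw [sub_eq_add_neg, add_right_comm, ← EReal.coe_ennreal_add, h_int,
    EReal.coe_ennreal_add, ← sub_eq_add_neg]
  lift b to ℝ≥0 using h_neg
  exact EReal.add_sub_cancel_right (b := (b : ℝ))

theorem eint_mono {f g : α → EReal} (h : f ≤ g) : eint μ f ≤ eint μ g :=
  EReal.sub_le_sub
    (EReal.coe_ennreal_le_coe_ennreal_iff.2
      (lintegral_mono fun x => EReal.toENNReal_le_toENNReal (h x)))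
    (EReal.coe_ennreal_le_coe_ennreal_iff.2
      (lintegral_mono fun x => EReal.toENNReal_le_toENNReal (EReal.neg_le_neg_iff.2 (h x))))

theorem eint_map {φ : α → β} (hφ : Measurable φ) {f : β → EReal} (hf : Measurable f) :
    eint (μ.map φ) f = eint μ (f ∘ φ) := by
  unfold eint
  rw [lintegral_map (show Measurable fun y => epos (f y) from hf.ereal_toENNReal) hφ,
    lintegral_map (show Measurable fun y => epos (-f y) from hf.neg.ereal_toENNReal) hφ]
  rfl

theorem eint_coe_ennreal_add_coe {F : α → ℝ≥0∞} (hF : Measurable F) {u : α → ℝ}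
    (hu : Measurable u) (hui : Integrable u μ) :
    eint μ (fun x => F x + (u x : EReal))
      = (∫⁻ x, F x ∂μ : ℝ≥0∞) + ((∫ x, u x ∂μ : ℝ) : EReal) := by
  have h_pt : ∀ x, (F x + u x : EReal) + (ENNReal.ofReal (-u x) : EReal)
      = ((F x + ENNReal.ofReal (u x) : ℝ≥0∞) : EReal) := fun x => by
    rw [EReal.coe_ennreal_add, add_assoc, EReal.coe_ennreal_ofReal, EReal.coe_ennreal_ofReal,
      ← EReal.coe_add]
    congr 2
    linarith [max_zero_sub_max_neg_zero_eq_self (u x)]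
  have hn : ∫⁻ x, ENNReal.ofReal (-u x) ∂μ ≠ ∞ := hui.neg.lintegral_lt_top.ne
  have hp : ∫⁻ x, ENNReal.ofReal (u x) ∂μ ≠ ∞ := hui.lintegral_lt_top.ne
  have h := eint_add_lintegral (hF.add hu.ennreal_ofReal) hu.neg.ennreal_ofReal hn h_pt
  simp only [Pi.add_apply, Pi.neg_apply] at h
  rw [lintegral_add_left hF, EReal.coe_ennreal_add] at h
  rw [integral_eq_lintegral_pos_part_sub_lintegral_neg_part hui, EReal.coe_sub, ← add_sub_assoc,
    EReal.coe_ennreal_toReal hp, ← h, ← EReal.coe_ennreal_toReal hn, EReal.add_sub_cancel_right]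

theorem eint_coe {u : α → ℝ} (hu : Measurable u) (hui : Integrable u μ) :
    eint μ (fun x => (u x : EReal)) = ((∫ x, u x ∂μ : ℝ) : EReal) := by
  simpa using eint_coe_ennreal_add_coe (μ := μ) (F := 0) measurable_const hu hui

theorem coe_toENNReal_sub_add {a : EReal} {m : ℝ} (h : (m : EReal) ≤ a) :
    ((a - m).toENNReal : EReal) + m = a := by
  rw [EReal.coe_toENNReal ((EReal.sub_nonneg (by simp) (by simp)).2 h), EReal.sub_add_cancel]

theorem measurable_toENNReal_sub_coe {f : α → EReal} (hf : Measurable f) (m : ℝ) :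
    Measurable fun x => (f x - m).toENNReal :=
  (hf.sub measurable_const).ereal_toENNReal

theorem eint_neg [IsFiniteMeasure μ] {f : α → EReal} {m : ℝ} (hm : ∀ x, (m : EReal) ≤ f x) :
    eint μ (fun x => -f x) = -eint μ f := by
  have h_neg : ∫⁻ x, epos (-f x) ∂μ ≠ ∞ := by
    refine ne_top_of_le_ne_top (lintegral_const_lt_top ENNReal.ofReal_ne_top).ne
      (lintegral_mono (g := fun _ => ENNReal.ofReal (-m)) fun x => ?_)
    change (-f x).toENNReal ≤ ENNReal.ofReal (-m)
    simpa using EReal.toENNReal_le_toENNReal (EReal.neg_le_neg_iff.2 (hm x))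
  unfold eint
  simp only [neg_neg]
  rw [EReal.neg_sub (.inl (EReal.coe_ennreal_ne_bot _)) (.inr (by simpa using h_neg)), add_comm,
    sub_eq_add_neg]

variable [IsProbabilityMeasure μ] {f : α → EReal} {m : ℝ}

theorem eint_add_coe_eq_lintegral_sub_add (hf : Measurable f)
    (hm : ∀ x, (m : EReal) ≤ f x) {u : α → ℝ} (hu : Measurable u) (hui : Integrable u μ) :
    eint μ (fun x => f x + (u x : EReal))
      = (∫⁻ x, (f x - m).toENNReal ∂μ : ℝ≥0∞) + ((m + ∫ x, u x ∂μ : ℝ) : EReal) := by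
  have h := eint_coe_ennreal_add_coe (μ := μ) (measurable_toENNReal_sub_coe hf m)
    (hu.const_add m) ((integrable_const _).add hui)
  simpa [EReal.coe_add, ← add_assoc, coe_toENNReal_sub_add (hm _),
    integral_add (integrable_const _) hui] using h

theorem eint_eq_lintegral_sub_add (hf : Measurable f) (hm : ∀ x, (m : EReal) ≤ f x) :
    eint μ f = (∫⁻ x, (f x - m).toENNReal ∂μ : ℝ≥0∞) + (m : EReal) := by
  simpa using eint_add_coe_eq_lintegral_sub_add hf hm (u := 0) measurable_const
    (integrable_zero _ _ _)

theorem eint_add_integral (hf : Measurable f) (hm : ∀ x, (m : EReal) ≤ f x) {u : α → ℝ}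
    (hu : Measurable u) (hui : Integrable u μ) :
    eint μ (fun x => f x + (u x : EReal)) = eint μ f + ((∫ x, u x ∂μ : ℝ) : EReal) := by
  rw [eint_add_coe_eq_lintegral_sub_add hf hm hu hui, eint_eq_lintegral_sub_add hf hm,
    EReal.coe_add, add_assoc]

theorem le_eint (hm : ∀ x, (m : EReal) ≤ f x) : (m : EReal) ≤ eint μ f := by
  calc (m : EReal) = eint μ (fun _ => (m : EReal)) := by
        rw [eint_coe measurable_const (integrable_const _)]; simp
    _ ≤ eint μ f := eint_mono hm

theorem ae_ne_top_of_eint_ne_top (hf : Measurable f) (hm : ∀ x, (m : EReal) ≤ f x)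
    (h : eint μ f ≠ ⊤) : ∀ᵐ x ∂μ, f x ≠ ⊤ := by
  rw [eint_eq_lintegral_sub_add hf hm] at h
  have h_fin : ∫⁻ x, (f x - m).toENNReal ∂μ ≠ ∞ := fun h_top => by simp [h_top] at h
  filter_upwards [ae_lt_top (measurable_toENNReal_sub_coe hf m) h_fin] with x hx hx_top
  simp [hx_top] at hx

theorem eint_mixture {μ₁ μ₂ : Measure α} [IsProbabilityMeasure μ₁] [IsProbabilityMeasure μ₂]
    {a b : ℝ≥0} (hab : a + b = 1) (hμ : μ = a • μ₁ + b • μ₂)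
    (hf : Measurable f) (hm : ∀ x, (m : EReal) ≤ f x) :
    eint μ f = ((a : ℝ) : EReal) * eint μ₁ f + ((b : ℝ) : EReal) * eint μ₂ f := by
  have h_nonneg : ∀ r : ℝ≥0, (0 : EReal) ≤ (r : ℝ) := fun r => EReal.coe_nonneg.2 r.2
  have hm_split : (m : EReal) = ((a : ℝ) : EReal) * m + ((b : ℝ) : EReal) * m := by
    rw [← EReal.right_distrib_of_nonneg (h_nonneg a) (h_nonneg b), ← EReal.coe_add,
      ← NNReal.coe_add, hab, NNReal.coe_one, EReal.coe_one, one_mul]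
  have h_lintegral : ((∫⁻ x, (f x - m).toENNReal ∂μ : ℝ≥0∞) : EReal)
      = ((a : ℝ) : EReal) * (∫⁻ x, (f x - m).toENNReal ∂μ₁ : ℝ≥0∞)
        + ((b : ℝ) : EReal) * (∫⁻ x, (f x - m).toENNReal ∂μ₂ : ℝ≥0∞) := by
    rw [hμ, lintegral_add_measure, lintegral_smul_measure, lintegral_smul_measure,
      EReal.coe_ennreal_add, ENNReal.smul_def, ENNReal.smul_def, smul_eq_mul, smul_eq_mul,
      EReal.coe_ennreal_mul, EReal.coe_ennreal_mul]
    rfl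
  simp only [eint_eq_lintegral_sub_add hf hm]
  rw [EReal.left_distrib_of_nonneg_of_ne_top (h_nonneg a) (EReal.coe_ne_top _),
    EReal.left_distrib_of_nonneg_of_ne_top (h_nonneg b) (EReal.coe_ne_top _), add_add_add_comm,
    ← hm_split, h_lintegral]

theorem eint_compProd {κ : Kernel α β} [IsMarkovKernel κ] {f : α × β → EReal}
    (hf : Measurable f) (hm : ∀ p, (m : EReal) ≤ f p) :
    eint (μ ⊗ₘ κ) f = eint μ fun x => eint (κ x) fun y => f (x, y) := by
  have h_sec : ∀ x, eint (κ x) (fun y => f (x, y))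
      = (∫⁻ y, (f (x, y) - m).toENNReal ∂κ x : ℝ≥0∞) + (m : EReal) := fun x =>
    eint_eq_lintegral_sub_add (hf.comp measurable_prodMk_left) fun y => hm (x, y)
  have h_meas := measurable_toENNReal_sub_coe hf m
  simp only [h_sec]
  rw [eint_eq_lintegral_sub_add hf hm, Measure.lintegral_compProd h_meas,
    eint_coe_ennreal_add_coe h_meas.lintegral_kernel_prod_right' measurable_const
      (integrable_const m)]
  simp

end Integral

section Borel

open TopologicalSpace

variable {Y : Type*} [TopologicalSpace Y] [MeasurableSpace Y] [BorelSpace Y]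

theorem ext_of_forall_integral_continuousMap [HasOuterApproxClosed Y] {σ τ : ProbabilityMeasure Y}
    (h : ∀ g : C(Y, ℝ), ∫ y, g y ∂(σ : Measure Y) = ∫ y, g y ∂(τ : Measure Y)) : σ = τ :=
  Subtype.ext <| ext_of_forall_integral_eq_of_IsFiniteMeasure (μ := (σ : Measure Y))
    (ν := (τ : Measure Y)) fun g => h g.toContinuousMap

variable [CompactSpace Y]

theorem integrable_continuousMap (g : C(Y, ℝ)) (μ : Measure Y) [IsFiniteMeasure μ] :
    Integrable g μ :=
  (BoundedContinuousFunction.mkOfCompact g).integrable μ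

theorem abs_integral_sub_le (g g' : C(Y, ℝ)) (σ : ProbabilityMeasure Y) :
    |∫ y, g y ∂(σ : Measure Y) - ∫ y, g' y ∂(σ : Measure Y)| ≤ ‖g - g'‖ := by
  rw [← integral_sub (integrable_continuousMap _ _) (integrable_continuousMap _ _)]
  simpa using norm_integral_le_of_norm_le_const (μ := (σ : Measure Y)) (f := fun y => g y - g' y)
    (ae_of_all _ fun y => (g - g').norm_coe_le_norm y)

theorem abs_integral_le_norm (g : C(Y, ℝ)) (σ : ProbabilityMeasure Y) :
    |∫ y, g y ∂(σ : Measure Y)| ≤ ‖g‖ := by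
  simpa using abs_integral_sub_le g 0 σ

theorem continuous_integral_left (σ : ProbabilityMeasure Y) :
    Continuous fun g : C(Y, ℝ) => ∫ y, g y ∂(σ : Measure Y) :=
  (LipschitzWith.of_dist_le_mul (K := 1) fun g g' => by
    simpa [dist_eq_norm, Real.dist_eq] using abs_integral_sub_le g g' σ).continuous

variable [MetrizableSpace Y]

theorem isClosedEmbedding_integral_denseSeq :
    IsClosedEmbedding fun (σ : ProbabilityMeasure Y) (n : ℕ) =>
      ∫ y, denseSeq C(Y, ℝ) n y ∂(σ : Measure Y) := by
  refine Continuous.isClosedEmbedding (continuous_pi fun n =>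
    ProbabilityMeasure.continuous_integral_continuousMap _) fun σ τ h => ?_
  exact ext_of_forall_integral_continuousMap <| congr_fun <|
    (denseRange_denseSeq C(Y, ℝ)).equalizer (continuous_integral_left σ)
      (continuous_integral_left τ) h

theorem lowerSemicontinuous_measure_of_isOpen {Z : Type*} [MeasurableSpace Z]
    [TopologicalSpace Z] [OpensMeasurableSpace Z] [HasOuterApproxClosed Z] {U : Set Z}
    (hU : IsOpen U) :
    LowerSemicontinuous fun σ : ProbabilityMeasure Z => (σ : Measure Z) U :=
  lowerSemicontinuous_iff_le_liminf.2 fun _ =>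
    ProbabilityMeasure.le_liminf_measure_open_of_tendsto tendsto_id hU

theorem measurable_measure_of_continuous {W Z : Type*} [TopologicalSpace W] [MeasurableSpace W]
    [OpensMeasurableSpace W] [MeasurableSpace Z] [TopologicalSpace Z] [BorelSpace Z]
    [HasOuterApproxClosed Z] {φ : W → ProbabilityMeasure Z} (hφ : Continuous φ) :
    Measurable fun w => (φ w : Measure Z) :=
  Measurable.measure_of_isPiSystem_of_isProbabilityMeasure BorelSpace.measurable_eq
    isPiSystem_isOpen fun _ hU => ((lowerSemicontinuous_measure_of_isOpen hU).comp hφ).measurable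

theorem measurable_integral_continuousMap {Z : Type*} [MeasurableSpace Z] [TopologicalSpace Z]
    [OpensMeasurableSpace Z] (g : C(Z, ℝ)) :
    Measurable fun σ : ProbabilityMeasure Z => ∫ y, g y ∂(σ : Measure Z) :=
  (g.continuous.stronglyMeasurable.integral_kernel (κ := ⟨_, measurable_subtype_coe⟩)).measurable

instance instBorelSpaceProbabilityMeasure : BorelSpace (ProbabilityMeasure Y) where
  measurable_eq := by
    refine le_antisymm ?_ ?_
    · let _ := borel (ProbabilityMeasure Y)
      have : BorelSpace (ProbabilityMeasure Y) := ⟨rfl⟩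
      exact (measurable_measure_of_continuous continuous_id).comap_le
    · rw [isClosedEmbedding_integral_denseSeq.eq_induced, borel_comap, ← BorelSpace.measurable_eq]
      exact (measurable_pi_lambda _ fun n => measurable_integral_continuousMap _).comap_le

theorem lowerSemicontinuous_add_coe {W : Type*} [TopologicalSpace W] {f : W → EReal}
    (hf : LowerSemicontinuous f) {u : W → ℝ} (hu : Continuous u) :
    LowerSemicontinuous fun s => f s + (u s : EReal) :=
  hf.add' (continuous_coe_real_ereal.comp hu).lowerSemicontinuous fun _ =>
    EReal.continuousAt_add (.inr (EReal.coe_ne_bot _)) (.inr (EReal.coe_ne_top _))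

section Lintegral

variable {Z : Type*} [MeasurableSpace Z] [TopologicalSpace Z] [OpensMeasurableSpace Z]
  [HasOuterApproxClosed Z] [FirstCountableTopology (ProbabilityMeasure Z)]

theorem lowerSemicontinuous_lintegral_of_ne_top {f : Z → ℝ≥0∞} (hf : LowerSemicontinuous f)
    (hf_top : ∀ z, f z ≠ ∞) :
    LowerSemicontinuous fun σ : ProbabilityMeasure Z => ∫⁻ z, f z ∂(σ : Measure Z) := by
  have h_layer : ∀ σ : ProbabilityMeasure Z,
      ∫⁻ z, f z ∂(σ : Measure Z)
        = ∫⁻ t in Ioi 0, (σ : Measure Z) {z | t < (f z).toReal} := fun σ => by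
    simpa [ENNReal.ofReal_toReal (hf_top _)] using lintegral_eq_lintegral_meas_lt (σ : Measure Z)
      (ae_of_all _ fun z => ENNReal.toReal_nonneg) hf.measurable.ennreal_toReal.aemeasurable
  have h_open : ∀ t ∈ Ioi (0 : ℝ), IsOpen {z | t < (f z).toReal} := fun t ht => by
    simp only [← ENNReal.ofReal_lt_iff_lt_toReal (le_of_lt ht) (hf_top _)]
    exact hf.isOpen_preimage (ENNReal.ofReal t)
  have h_meas : ∀ σ : ProbabilityMeasure Z,
      Measurable fun t : ℝ => (σ : Measure Z) {z | t < (f z).toReal} := fun σ =>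
    Antitone.measurable fun s t hst => measure_mono fun z hz => hst.trans_lt hz
  simp only [h_layer]
  refine lowerSemicontinuous_iff_le_liminf.2 fun σ => ?_
  calc ∫⁻ t in Ioi 0, (σ : Measure Z) {z | t < (f z).toReal}
      ≤ ∫⁻ t in Ioi 0, liminf (fun τ : ProbabilityMeasure Z =>
          (τ : Measure Z) {z | t < (f z).toReal}) (𝓝 σ) :=
        setLIntegral_mono' measurableSet_Ioi fun t ht =>
          (lowerSemicontinuous_measure_of_isOpen (h_open t ht)).le_liminf σ
    _ ≤ _ := lintegral_liminf_le h_meas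

theorem lowerSemicontinuous_lintegral {f : Z → ℝ≥0∞} (hf : LowerSemicontinuous f) :
    LowerSemicontinuous fun σ : ProbabilityMeasure Z => ∫⁻ z, f z ∂(σ : Measure Z) := by
  have h_min : ∀ n : ℕ, LowerSemicontinuous fun z => min (f z) n := fun n =>
    hf.inf lowerSemicontinuous_const
  have h_iSup : ∀ z, ⨆ n : ℕ, min (f z) n = f z := fun z => by
    rw [← inf_iSup_eq, ENNReal.iSup_natCast, inf_top_eq]
  have h_mono : Monotone fun (n : ℕ) z => min (f z) (n : ℝ≥0∞) := fun i j hij z =>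
    min_le_min_left _ (by exact_mod_cast hij)
  have h_eq : ∀ σ : ProbabilityMeasure Z,
      ∫⁻ z, f z ∂(σ : Measure Z) = ⨆ n : ℕ, ∫⁻ z, min (f z) n ∂(σ : Measure Z) := fun σ => by
    rw [← lintegral_iSup (fun n => (h_min n).measurable) h_mono]
    simp only [h_iSup]
  simp only [h_eq]
  exact lowerSemicontinuous_iSup fun n => lowerSemicontinuous_lintegral_of_ne_top (h_min n)
    fun z => ne_top_of_le_ne_top (ENNReal.natCast_ne_top n) (min_le_right _ _)

theorem lowerSemicontinuous_eint {f : Z → EReal} (hf : LowerSemicontinuous f) {m : ℝ}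
    (hm : ∀ z, (m : EReal) ≤ f z) :
    LowerSemicontinuous fun σ : ProbabilityMeasure Z => eint (σ : Measure Z) f := by
  have h_excess : LowerSemicontinuous fun z => (f z - m).toENNReal := by
    simp only [sub_eq_add_neg, ← EReal.coe_neg]
    exact EReal.continuous_toENNReal.comp_lowerSemicontinuous
      (lowerSemicontinuous_add_coe hf continuous_const) fun _ _ => EReal.toENNReal_le_toENNReal
  simp only [eint_eq_lintegral_sub_add hf.measurable hm]
  exact lowerSemicontinuous_add_coe (continuous_coe_ennreal_ereal.comp_lowerSemicontinuous
    (lowerSemicontinuous_lintegral h_excess)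
    fun _ _ => EReal.coe_ennreal_le_coe_ennreal_iff.2) continuous_const

end Lintegral

end Borel

section Argmin

open TopologicalSpace

variable {W K : Type*} [TopologicalSpace W] [TopologicalSpace K] {f : W → K → EReal}

theorem lowerSemicontinuous_biInf_of_isCompact (hf : LowerSemicontinuous fun p : W × K => f p.1 p.2)
    {A : Set K} (hA : IsCompact A) : LowerSemicontinuous fun w => ⨅ k ∈ A, f w k := by
  intro w y hy
  obtain ⟨z, hyz, hz⟩ := exists_between hy
  have h_near : ∀ᶠ w' in 𝓝 w, ∀ k ∈ A, z < f w' k :=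
    hA.eventually_forall_of_forall_eventually fun k hk =>
      hf (w, k) z (hz.trans_le (iInf₂_le k hk))
  exact h_near.mono fun w' hw' => hyz.trans_le (le_iInf₂ fun k hk => (hw' k hk).le)

theorem exists_eq_biInf_of_isCompact {g : K → EReal} (hg : LowerSemicontinuous g) {A : Set K}
    (hA : IsCompact A) (hA_ne : A.Nonempty) : ∃ k ∈ A, g k = ⨅ k' ∈ A, g k' := by
  obtain ⟨k, hk, hk_min⟩ := (hg.lowerSemicontinuousOn A).exists_isMinOn hA_ne hA
  exact ⟨k, hk, le_antisymm (le_iInf₂ fun k' hk' => hk_min hk') (iInf₂_le k hk)⟩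

theorem lowerSemicontinuous_biInf_fiber [CompactSpace K] [T2Space W] {φ : K → W}
    (hφ : Continuous φ) {F : K → EReal} (hF : LowerSemicontinuous F) :
    LowerSemicontinuous fun w => ⨅ k ∈ φ ⁻¹' {w}, F k := by
  intro w y hy
  obtain ⟨z, hyz, hz⟩ := exists_between hy
  have h_closed : IsClosed (φ '' {k | F k ≤ z}) :=
    ((hF.isClosed_preimage z).isCompact.image hφ).isClosed
  have hw : w ∉ φ '' {k | F k ≤ z} := by
    rintro ⟨k, hk, rfl⟩
    exact (hz.trans_le (biInf_le F (rfl : k ∈ φ ⁻¹' {φ k}))).not_ge hk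
  filter_upwards [h_closed.isOpen_compl.mem_nhds hw] with w' hw'
  refine hyz.trans_le (le_iInf₂ fun k hk => ?_)
  by_contra! hk_lt
  exact hw' ⟨k, hk_lt.le, hk⟩

theorem lowerSemicontinuous_section (hf : LowerSemicontinuous fun p : W × K => f p.1 p.2) (w : W) :
    LowerSemicontinuous (f w) :=
  hf.comp (Continuous.prodMk_right w)

theorem exists_isLeast_argmin [LinearOrder K] [ClosedIicTopology K] [CompactSpace K] [Nonempty K]
    {g : K → EReal} (hg : LowerSemicontinuous g) : ∃ t, IsLeast {k | g k = ⨅ k', g k'} t := by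
  have h_argmin : {k | g k = ⨅ k', g k'} = {k | g k ≤ ⨅ k', g k'} :=
    Set.ext fun k => ⟨fun h => h.le, fun h => h.antisymm (iInf_le g k)⟩
  rw [h_argmin]
  obtain ⟨k, -, hk⟩ := exists_eq_biInf_of_isCompact hg isCompact_univ univ_nonempty
  exact (hg.isClosed_preimage _).isCompact.exists_isLeast ⟨k, (hk.trans iInf_univ).le⟩

variable [MeasurableSpace W] [OpensMeasurableSpace W]

theorem exists_measurable_argmin_of_subset_real {C : Set ℝ} [CompactSpace C] [Nonempty C]
    {f : W → C → EReal} (hf : LowerSemicontinuous fun p : W × C => f p.1 p.2) :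
    ∃ t : W → C, Measurable t ∧ ∀ w, f w (t w) = ⨅ k, f w k := by
  choose t ht using fun w => exists_isLeast_argmin (lowerSemicontinuous_section hf w)
  refine ⟨t, .subtype_mk (f := fun w => (t w : ℝ)) (measurable_of_Iic fun q => ?_),
    fun w => (ht w).1⟩
  have hA : IsCompact {k : C | (k : ℝ) ≤ q} :=
    (isClosed_le continuous_subtype_val continuous_const).isCompact
  rcases {k : C | (k : ℝ) ≤ q}.eq_empty_or_nonempty with hA_empty | hA_ne
  · convert MeasurableSet.empty
    exact eq_empty_of_forall_notMem fun w hw => hA_empty.le (show t w ∈ _ from hw)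
  have h_eq : (fun w => (t w : ℝ)) ⁻¹' Iic q =
      {w | ⨅ k ∈ {k : C | (k : ℝ) ≤ q}, f w k ≤ ⨅ k ∈ univ, f w k} := by
    ext w
    rw [mem_preimage, mem_Iic, mem_ofPred_eq, iInf_univ]
    refine ⟨fun hw => (iInf₂_le (t w) hw).trans (ht w).1.le, fun hw => show (t w : ℝ) ≤ q from ?_⟩
    obtain ⟨k, hk, hk_min⟩ :=
      exists_eq_biInf_of_isCompact (lowerSemicontinuous_section hf w) hA hA_ne
    exact le_trans ((ht w).2 ((hk_min.trans_le hw).antisymm (iInf_le _ _))) hk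
  rw [h_eq]
  exact measurableSet_le (lowerSemicontinuous_biInf_of_isCompact hf hA).measurable
    (lowerSemicontinuous_biInf_of_isCompact hf isCompact_univ).measurable

theorem exists_cantorSet_continuous_surjective (S : Type*) [TopologicalSpace S] [MetrizableSpace S]
    [CompactSpace S] [Nonempty S] :
    ∃ γ : cantorSet → S, Continuous γ ∧ Function.Surjective γ := by
  let _ := metrizableSpaceMetric S
  obtain ⟨φ, hφ, hφ_surj⟩ := exists_nat_bool_continuous_surjective_of_compact S
  exact ⟨φ ∘ cantorSetHomeomorphNatToBool, hφ.comp (Homeomorph.continuous _),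
    hφ_surj.comp (Homeomorph.surjective _)⟩

theorem exists_measurable_argmin {S : Type*} [TopologicalSpace S] [MetrizableSpace S]
    [CompactSpace S] [Nonempty S] [MeasurableSpace S] [BorelSpace S] {f : W → S → EReal}
    (hf : LowerSemicontinuous fun p : W × S => f p.1 p.2) :
    ∃ ξ : W → S, Measurable ξ ∧ ∀ w, f w (ξ w) = ⨅ s, f w s := by
  obtain ⟨γ, hγ, hγ_surj⟩ := exists_cantorSet_continuous_surjective S
  have : CompactSpace cantorSet := isCompact_iff_compactSpace.1 isCompact_cantorSet
  have : Nonempty cantorSet := hγ_surj.nonempty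
  obtain ⟨t, ht, ht_min⟩ := exists_measurable_argmin_of_subset_real
    (f := fun w k => f w (γ k)) (hf.comp (continuous_id.prodMap hγ))
  exact ⟨γ ∘ t, hγ.measurable.comp ht, fun w => (ht_min w).trans (hγ_surj.iInf_comp (f w))⟩

end Argmin

section Disintegration

variable {X Y : Type*} [MeasurableSpace X] [MeasurableSpace Y]

theorem integral_bind {E : Type*} [NormedAddCommGroup E] [NormedSpace ℝ E] {μ : Measure X}
    {κ : X → Measure Y} (hκ : Measurable κ) {g : Y → E} (hg : Integrable g (μ.bind κ)) :
    ∫ y, g y ∂μ.bind κ = ∫ x, ∫ y, g y ∂κ x ∂μ :=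
  Kernel.integral_comp (κ := .const Unit μ) (η := ⟨κ, hκ⟩) (a := ()) hg

variable {μ : ProbabilityMeasure X} {ν : ProbabilityMeasure Y} {π : ProbabilityMeasure (X × Y)}
  {κ : X → ProbabilityMeasure Y}

/-- The plan with first marginal `μ` and disintegration `κ`. -/
def planOf (μ : ProbabilityMeasure X) (κ : X → ProbabilityMeasure Y)
    (hκ : Measurable fun x => (κ x : Measure Y)) : ProbabilityMeasure (X × Y) :=
  have : IsMarkovKernel (⟨fun x => κ x, hκ⟩ : Kernel X Y) := ⟨fun x => (κ x).2⟩
  ⟨(μ : Measure X) ⊗ₘ ⟨fun x => κ x, hκ⟩, inferInstance⟩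

theorem isDisintegration_planOf (μ : ProbabilityMeasure X)
    (hκ : Measurable fun x => (κ x : Measure Y)) : IsDisintegration (planOf μ κ hκ) μ κ := by
  have : IsMarkovKernel (⟨fun x => κ x, hκ⟩ : Kernel X Y) := ⟨fun x => (κ x).2⟩
  exact ⟨hκ, fun _ _ hA hB => Measure.compProd_apply_prod hA hB⟩

theorem IsDisintegration.map_fst (h : IsDisintegration π μ κ) :
    (π : Measure (X × Y)).map Prod.fst = μ := by
  ext A hA
  rw [Measure.map_apply measurable_fst hA, ← prod_univ, h.2 A univ hA .univ]
  simp

theorem IsDisintegration.map_snd (h : IsDisintegration π μ κ) :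
    (π : Measure (X × Y)).map Prod.snd = (μ : Measure X).bind fun x => κ x := by
  ext B hB
  rw [Measure.map_apply measurable_snd hB, ← univ_prod, h.2 univ B .univ hB,
    Measure.bind_apply hB h.1.aemeasurable, Measure.restrict_univ]

theorem isCoupling_planOf (hκ : Measurable fun x => (κ x : Measure Y))
    (hν : (μ : Measure X).bind (fun x => κ x) = (ν : Measure Y)) : IsCoupling (planOf μ κ hκ) μ ν :=
  ⟨(isDisintegration_planOf μ hκ).map_fst, (isDisintegration_planOf μ hκ).map_snd.trans hν⟩

theorem weakTransport_eq_iInf_bind (c : X → ProbabilityMeasure Y → EReal)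
    (μ : ProbabilityMeasure X) (ν : ProbabilityMeasure Y) :
    weakTransport c μ ν = ⨅ κ ∈ {κ : X → ProbabilityMeasure Y |
        Measurable (fun x => (κ x : Measure Y)) ∧
          (μ : Measure X).bind (fun x => κ x) = (ν : Measure Y)},
      eint (μ : Measure X) fun x => c x (κ x) := by
  refine le_antisymm (le_iInf₂ fun κ ⟨hκ, hν⟩ => ?_) (le_iInf₂ fun π hπ => le_iInf₂ fun κ h => ?_)
  · have hπ : planOf μ κ hκ ∈ {π | IsCoupling π μ ν} := isCoupling_planOf hκ hν
    have hκ_mem : κ ∈ {κ' | IsDisintegration (planOf μ κ hκ) μ κ'} := isDisintegration_planOf μ hκ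
    exact (biInf_le (planCost μ c) hπ).trans (biInf_le _ hκ_mem)
  · exact biInf_le (fun κ : X → ProbabilityMeasure Y => eint (μ : Measure X) fun x => c x (κ x))
      ⟨h.1, h.map_snd.symm.trans hπ.2⟩

theorem weakTransport_le_eint (c : X → ProbabilityMeasure Y → EReal)
    (hκ : Measurable fun x => (κ x : Measure Y))
    (hν : (μ : Measure X).bind (fun x => κ x) = (ν : Measure Y)) :
    weakTransport c μ ν ≤ eint (μ : Measure X) fun x => c x (κ x) := by
  rw [weakTransport_eq_iInf_bind]
  exact biInf_le (fun κ : X → ProbabilityMeasure Y => eint (μ : Measure X) fun x => c x (κ x))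
    ⟨hκ, hν⟩

end Disintegration

section Separation

/-- Convexity of a functional on probability measures: `f (a • σ₁ + b • σ₂)` is at most
`a * f σ₁ + b * f σ₂`. The mixture is given by an equation between measures, because
`ProbabilityMeasure Y` carries no addition. -/
def ConvexOnProb {Y : Type*} [MeasurableSpace Y] (f : ProbabilityMeasure Y → EReal) : Prop :=
  ∀ (σ₁ σ₂ τ : ProbabilityMeasure Y) (a b : ℝ≥0), a + b = 1 →
    (τ : Measure Y) = a • (σ₁ : Measure Y) + b • (σ₂ : Measure Y) →
    f τ ≤ ((a : ℝ) : EReal) * f σ₁ + ((b : ℝ) : EReal) * f σ₂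

/-- The mixture `a • σ₁ + b • σ₂` of two probability measures. -/
def mixture {Y : Type*} [MeasurableSpace Y] (σ₁ σ₂ : ProbabilityMeasure Y) {a b : ℝ≥0}
    (hab : a + b = 1) : ProbabilityMeasure Y :=
  ⟨a • (σ₁ : Measure Y) + b • (σ₂ : Measure Y), ⟨by
    simp only [Measure.add_apply, Measure.smul_apply, measure_univ, ENNReal.smul_def, smul_eq_mul,
      mul_one]
    exact_mod_cast hab⟩⟩

theorem map_mixture {X Y : Type*} [MeasurableSpace X] [MeasurableSpace Y]
    (μ₁ μ₂ : ProbabilityMeasure X) {a b : ℝ≥0} (hab : a + b = 1) {φ : X → Y} (hφ : Measurable φ) :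
    (mixture μ₁ μ₂ hab).map hφ.aemeasurable
      = mixture (μ₁.map hφ.aemeasurable) (μ₂.map hφ.aemeasurable) hab :=
  Subtype.ext <| (Measure.map_add _ _ hφ).trans <|
    congrArg₂ (· + ·) (Measure.map_smul a _ φ) (Measure.map_smul b _ φ)

theorem mixture_self {X : Type*} [MeasurableSpace X] (μ : ProbabilityMeasure X) {a b : ℝ≥0}
    (hab : a + b = 1) : mixture μ μ hab = μ :=
  Subtype.ext <| show a • (μ : Measure X) + b • (μ : Measure X) = μ by
    rw [← add_smul, hab, one_smul]

variable {Y : Type*} [TopologicalSpace Y] [CompactSpace Y] [MeasurableSpace Y] [BorelSpace Y]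

/-- Integration against `σ`, as a point of the weak dual of `C(Y)`. -/
def integralFunctional (σ : ProbabilityMeasure Y) : WeakDual ℝ C(Y, ℝ) :=
  StrongDual.toWeakDual
    { toFun := fun g => ∫ y, g y ∂(σ : Measure Y)
      map_add' := fun g g' =>
        integral_add (integrable_continuousMap g _) (integrable_continuousMap g' _)
      map_smul' := fun r g => integral_const_mul r g
      cont := continuous_integral_left σ }

theorem integralFunctional_mixture (σ₁ σ₂ : ProbabilityMeasure Y) {a b : ℝ≥0} (hab : a + b = 1) :
    integralFunctional (mixture σ₁ σ₂ hab)
      = (a : ℝ) • integralFunctional σ₁ + (b : ℝ) • integralFunctional σ₂ := by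
  refine ContinuousLinearMap.ext fun g => ?_
  change ∫ y, g y ∂(a • (σ₁ : Measure Y) + b • (σ₂ : Measure Y)) =
    a * ∫ y, g y ∂(σ₁ : Measure Y) + b * ∫ y, g y ∂(σ₂ : Measure Y)
  rw [integral_add_measure (integrable_continuousMap g _) (integrable_continuousMap g _),
    integral_smul_nnreal_measure, integral_smul_nnreal_measure]
  rfl

/-- The epigraph of a functional on `P(Y)`, placed in the locally convex space
`C(Y)* × ℝ`. -/
def weakEpigraph (f : ProbabilityMeasure Y → EReal) : Set (WeakDual ℝ C(Y, ℝ) × ℝ) :=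
  Prod.map integralFunctional id '' {p | f p.1 ≤ (p.2 : EReal)}

theorem ConvexOnProb.convex_weakEpigraph {f : ProbabilityMeasure Y → EReal}
    (hf : ConvexOnProb f) : Convex ℝ (weakEpigraph f) := by
  rintro _ ⟨⟨σ₁, t₁⟩, h₁, rfl⟩ _ ⟨⟨σ₂, t₂⟩, h₂, rfl⟩ a b ha hb hab
  lift a to ℝ≥0 using ha
  lift b to ℝ≥0 using hb
  have hab' : a + b = 1 := by exact_mod_cast hab
  refine ⟨(mixture σ₁ σ₂ hab', a * t₁ + b * t₂), ?_,
    Prod.ext (integralFunctional_mixture σ₁ σ₂ hab') rfl⟩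
  calc f (mixture σ₁ σ₂ hab') ≤ ((a : ℝ) : EReal) * f σ₁ + ((b : ℝ) : EReal) * f σ₂ :=
        hf σ₁ σ₂ _ a b hab' rfl
    _ ≤ ((a : ℝ) : EReal) * t₁ + ((b : ℝ) : EReal) * t₂ := by
        gcongr
        · exact h₁
        · exact h₂
    _ = ((a * t₁ + b * t₂ : ℝ) : EReal) := by push_cast; rfl

variable [HasOuterApproxClosed Y] [CompactSpace (ProbabilityMeasure Y)]
  {f : ProbabilityMeasure Y → EReal}

theorem isClosedEmbedding_integralFunctional :
    IsClosedEmbedding (integralFunctional : ProbabilityMeasure Y → WeakDual ℝ C(Y, ℝ)) :=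
  (WeakDual.continuous_of_continuous_eval
    ProbabilityMeasure.continuous_integral_continuousMap).isClosedEmbedding fun _ _ h =>
      ext_of_forall_integral_continuousMap fun g => DFunLike.congr_fun h g

theorem isClosed_weakEpigraph (hf : LowerSemicontinuous f) : IsClosed (weakEpigraph f) :=
  (isClosedEmbedding_integralFunctional.prodMap .id).isClosedMap _ <|
    hf.isClosed_epigraph.preimage (continuous_id.prodMap continuous_coe_real_ereal)

theorem exists_separating_affine (hf : ConvexOnProb f) (hf_lsc : LowerSemicontinuous f)
    {ν : ProbabilityMeasure Y} {s : ℝ} (hs : (s : EReal) < f ν) :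
    ∃ (h : C(Y, ℝ)) (β u : ℝ), ∫ y, h y ∂(ν : Measure Y) + β * s < u ∧
      ∀ (σ : ProbabilityMeasure Y) (t : ℝ), f σ ≤ t → u < ∫ y, h y ∂(σ : Measure Y) + β * t := by
  have : LocallyConvexSpace ℝ (WeakDual ℝ C(Y, ℝ)) :=
    inferInstanceAs (LocallyConvexSpace ℝ (WeakBilin (topDualPairing ℝ C(Y, ℝ))))
  have h_notMem : (integralFunctional ν, s) ∉ weakEpigraph f := by
    have h_inj : (Prod.map (integralFunctional (Y := Y)) (id : ℝ → ℝ)).Injective :=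
      isClosedEmbedding_integralFunctional.injective.prodMap Function.injective_id
    exact fun h => hs.not_ge (h_inj.mem_set_image (a := (ν, s)).1 h)
  obtain ⟨L, u, hν, hL⟩ := geometric_hahn_banach_point_closed hf.convex_weakEpigraph
    (isClosed_weakEpigraph hf_lsc) h_notMem
  obtain ⟨h, h_eval⟩ := LinearMap.dualEmbedding_surjective (topDualPairing ℝ C(Y, ℝ))
    (L.comp (.inl ℝ (WeakDual ℝ C(Y, ℝ)) ℝ))
  have hL_apply : ∀ (σ : ProbabilityMeasure Y) (t : ℝ),
      L (integralFunctional σ, t) = ∫ y, h y ∂(σ : Measure Y) + L (0, 1) * t := fun σ t => by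
    have h_split : (integralFunctional σ, t)
        = (integralFunctional σ, (0 : ℝ)) + t • ((0 : WeakDual ℝ C(Y, ℝ)), (1 : ℝ)) := by simp
    rw [h_split, map_add, map_smul, smul_eq_mul, mul_comm]
    congr 1
    exact (DFunLike.congr_fun h_eval (integralFunctional σ)).symm
  refine ⟨h, L (0, 1), u, hL_apply ν s ▸ hν, fun σ t ht => ?_⟩
  rw [← hL_apply]
  exact hL _ ⟨(σ, t), ht, rfl⟩

theorem nonneg_of_forall_lt_add_mul {u v β t₀ : ℝ} (h : ∀ t ≥ t₀, u < v + β * t) : 0 ≤ β := by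
  by_contra! hβ
  obtain ⟨t, ht, ht_le⟩ := ((eventually_ge_atTop t₀).and
    ((tendsto_id.const_mul_atTop_of_neg hβ).eventually_le_atBot (u - v))).exists
  linarith [h t ht, show β * t ≤ u - v from ht_le]

theorem exists_integral_le_and_lt (hf : ConvexOnProb f) (hf_lsc : LowerSemicontinuous f)
    {m : ℝ} (hm : ∀ σ, (m : EReal) ≤ f σ)
    {ν : ProbabilityMeasure Y} {s : ℝ} (hs : (s : EReal) < f ν) :
    ∃ g : C(Y, ℝ), (∀ σ : ProbabilityMeasure Y, ((∫ y, g y ∂(σ : Measure Y) : ℝ) : EReal) ≤ f σ) ∧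
      s < ∫ y, g y ∂(ν : Measure Y) := by
  by_cases hf_top : ∀ σ, f σ = ⊤
  · exact ⟨ContinuousMap.const Y (s + 1), fun σ => hf_top σ ▸ le_top, by simp⟩
  push Not at hf_top
  obtain ⟨σ₀, hσ₀⟩ := hf_top
  obtain ⟨h, β, u, hν, h_sep⟩ := exists_separating_affine hf hf_lsc hs
  have hσ₀_le : ∀ t ≥ (f σ₀).toReal, f σ₀ ≤ t := fun t ht =>
    (EReal.le_coe_toReal hσ₀).trans (EReal.coe_le_coe_iff.2 ht)
  have hβ : 0 ≤ β := nonneg_of_forall_lt_add_mul fun t ht => h_sep σ₀ t (hσ₀_le t ht)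
  -- The separating hyperplane may be vertical (`β = 0`); tilting it by the lower bound `m`,
  -- i.e. adding `ε * (t - m) ≥ 0`, makes its slope positive.
  obtain ⟨ε, hε, hε_lt⟩ := exists_pos_mul_lt (sub_pos.2 hν) (s - m)
  have hβε : 0 < β + ε := by linarith
  let g : C(Y, ℝ) := (β + ε)⁻¹ • (ContinuousMap.const Y (u + ε * m) - h)
  have hg_integral : ∀ σ : ProbabilityMeasure Y, ∫ y, g y ∂(σ : Measure Y)
      = (u + ε * m - ∫ y, h y ∂(σ : Measure Y)) / (β + ε) := fun σ => by
    simp only [g, ContinuousMap.smul_apply, ContinuousMap.sub_apply, ContinuousMap.const_apply]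
    rw [integral_smul, integral_sub (integrable_const _) (integrable_continuousMap h _),
      integral_const, probReal_univ, one_smul, smul_eq_mul, inv_mul_eq_div]
  refine ⟨g, fun σ => ?_, ?_⟩
  · refine EReal.le_of_forall_lt_iff_le.1 fun t ht => EReal.coe_le_coe_iff.2 ?_
    have hmt : m ≤ t := EReal.coe_le_coe_iff.1 ((hm σ).trans ht.le)
    rw [hg_integral, div_le_iff₀ hβε]
    nlinarith [h_sep σ t ht.le]
  · rw [hg_integral, lt_div_iff₀ hβε]
    linarith

theorem le_of_forall_iSup_sub_le {f₁ f₂ : ProbabilityMeasure Y → EReal} {m : ℝ}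
    (hf₂ : ConvexOnProb f₂) (hf₂_lsc : LowerSemicontinuous f₂) (hm : ∀ σ, (m : EReal) ≤ f₂ σ)
    (h : ∀ g : C(Y, ℝ),
      (⨆ σ : ProbabilityMeasure Y, ((∫ y, g y ∂(σ : Measure Y) : ℝ) : EReal) - f₁ σ)
        ≤ ⨆ σ : ProbabilityMeasure Y, ((∫ y, g y ∂(σ : Measure Y) : ℝ) : EReal) - f₂ σ) :
    f₂ ≤ f₁ := by
  refine fun ν => EReal.ge_of_forall_gt_iff_ge.1 fun s hs => ?_
  obtain ⟨g, hg, hsg⟩ := exists_integral_le_and_lt hf₂ hf₂_lsc hm hs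
  have h_nonpos : ((∫ y, g y ∂(ν : Measure Y) : ℝ) : EReal) - f₁ ν ≤ 0 :=
    (le_iSup (fun σ : ProbabilityMeasure Y => ((∫ y, g y ∂(σ : Measure Y) : ℝ) : EReal) - f₁ σ)
      ν).trans <| (h g).trans <| iSup_le fun σ => EReal.sub_nonpos.2 (hg σ)
  exact (EReal.coe_le_coe_iff.2 hsg.le).trans (EReal.sub_nonpos.1 h_nonpos)

end Separation

section Legendre

open TopologicalSpace

theorem ereal_neg_iInf {ι : Sort*} (f : ι → EReal) : -⨅ i, f i = ⨆ i, -f i :=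
  EReal.negOrderIso.map_iInf f

theorem ereal_coe_sub_eq_neg_add (r : ℝ) (z : EReal) :
    (r : EReal) - z = -(z + ((-r : ℝ) : EReal)) := by
  rw [EReal.neg_add (.inr (EReal.coe_ne_top _)) (.inr (EReal.coe_ne_bot _)), EReal.coe_neg,
    sub_eq_add_neg, sub_eq_add_neg, neg_neg, add_comm]

variable {X Y : Type*} [MeasurableSpace X] [TopologicalSpace Y] [CompactSpace Y]
  [MeasurableSpace Y] [BorelSpace Y] {c : X → ProbabilityMeasure Y → EReal}
  {m : ℝ} {κ : X → ProbabilityMeasure Y}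

theorem integrable_integral_continuousMap (μ : ProbabilityMeasure X) (hκ : Measurable κ)
    (g : C(Y, ℝ)) : Integrable (fun x => ∫ y, g y ∂(κ x : Measure Y)) (μ : Measure X) :=
  .of_bound ((measurable_integral_continuousMap g).comp hκ).aestronglyMeasurable ‖g‖
    (ae_of_all _ fun x => abs_integral_le_norm g (κ x))

theorem eint_costOp_of_argmin (hm : ∀ x σ, (m : EReal) ≤ c x σ) (μ : ProbabilityMeasure X)
    (g : C(Y, ℝ))
    (hκ : ∀ x, c x (κ x) + ((-∫ y, g y ∂(κ x : Measure Y) : ℝ) : EReal)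
      = ⨅ σ : ProbabilityMeasure Y, c x σ + ((-∫ y, g y ∂(σ : Measure Y) : ℝ) : EReal)) :
    eint (μ : Measure X) (costOp c g) = -eint (μ : Measure X) fun x =>
      c x (κ x) + ((-∫ y, g y ∂(κ x : Measure Y) : ℝ) : EReal) := by
  rw [← eint_neg (m := m - ‖g‖)]
  · congr 1 with x
    simp only [costOp, ereal_coe_sub_eq_neg_add, ← ereal_neg_iInf, hκ]
  · intro x
    rw [sub_eq_add_neg, EReal.coe_add]
    exact add_le_add (hm _ _) (EReal.coe_le_coe_iff.2
      (neg_le_neg ((le_abs_self _).trans (abs_integral_le_norm _ _))))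

variable [TopologicalSpace X] [OpensMeasurableSpace X] [MetrizableSpace Y]

theorem measurable_cost_comp
    (hc : LowerSemicontinuous fun p : X × ProbabilityMeasure Y => c p.1 p.2)
    (hκ : Measurable κ) : Measurable fun x => c x (κ x) :=
  hc.measurable.comp (measurable_id.prodMk hκ)

theorem eint_cost_sub_integral
    (hc : LowerSemicontinuous fun p : X × ProbabilityMeasure Y => c p.1 p.2)
    (hm : ∀ x σ, (m : EReal) ≤ c x σ) (μ : ProbabilityMeasure X) {ν : ProbabilityMeasure Y}
    (hκ : Measurable fun x => (κ x : Measure Y))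
    (hν : (μ : Measure X).bind (fun x => κ x) = (ν : Measure Y)) (g : C(Y, ℝ)) :
    eint (μ : Measure X) (fun x => c x (κ x) + ((-∫ y, g y ∂(κ x : Measure Y) : ℝ) : EReal))
      = eint (μ : Measure X) (fun x => c x (κ x)) + ((-∫ y, g y ∂(ν : Measure Y) : ℝ) : EReal) := by
  have hκ' : Measurable κ := hκ.subtype_mk
  have hg := integrable_integral_continuousMap μ hκ' g
  rw [eint_add_integral (u := fun x => -∫ y, g y ∂(κ x : Measure Y))
      (measurable_cost_comp hc hκ') (fun x => hm x (κ x))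
      ((measurable_integral_continuousMap g).comp hκ').neg hg.neg, integral_neg, ← hν,
    integral_bind hκ (hν ▸ integrable_continuousMap g _)]

theorem iSup_sub_weakTransport
    (hc : LowerSemicontinuous fun p : X × ProbabilityMeasure Y => c p.1 p.2)
    (hm : ∀ x σ, (m : EReal) ≤ c x σ) (μ : ProbabilityMeasure X) (g : C(Y, ℝ)) :
    (⨆ ν : ProbabilityMeasure Y, ((∫ y, g y ∂(ν : Measure Y) : ℝ) : EReal) - weakTransport c μ ν)
      = eint (μ : Measure X) (costOp c g) := by
  rcases isEmpty_or_nonempty (ProbabilityMeasure Y) with _ | _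
  · simp [costOp, eint, epos]
  obtain ⟨ξ, hξ, hξ_min⟩ := exists_measurable_argmin (f := fun x (σ : ProbabilityMeasure Y) =>
    c x σ + ((-∫ y, g y ∂(σ : Measure Y) : ℝ) : EReal)) <|
    lowerSemicontinuous_add_coe hc
      ((ProbabilityMeasure.continuous_integral_continuousMap g).neg.comp continuous_snd)
  have hξ' : Measurable fun x => (ξ x : Measure Y) := measurable_subtype_coe.comp hξ
  rw [eint_costOp_of_argmin hm μ g hξ_min]
  refine le_antisymm (iSup_le fun ν => ?_) ?_
  · rw [ereal_coe_sub_eq_neg_add, EReal.neg_le_neg_iff,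
      ← EReal.sub_le_iff_le_add (.inl (EReal.coe_ne_bot _)) (.inl (EReal.coe_ne_top _)),
      weakTransport_eq_iInf_bind]
    refine le_iInf₂ fun κ ⟨hκ, hν⟩ => ?_
    rw [EReal.sub_le_iff_le_add (.inl (EReal.coe_ne_bot _)) (.inl (EReal.coe_ne_top _)),
      ← eint_cost_sub_integral hc hm μ hκ hν]
    exact eint_mono fun x => (hξ_min x).trans_le (iInf_le _ (κ x))
  · let ν : ProbabilityMeasure Y := (planOf μ ξ hξ').map measurable_snd.aemeasurable
    have hν : (μ : Measure X).bind (fun x => ξ x) = (ν : Measure Y) :=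
      (isDisintegration_planOf μ hξ').map_snd.symm
    refine le_iSup_of_le ν ?_
    rw [eint_cost_sub_integral hc hm μ hξ' hν, ereal_coe_sub_eq_neg_add, EReal.neg_le_neg_iff]
    gcongr
    exact weakTransport_le_eint c hξ' hν

end Legendre

section Barycenter

open TopologicalSpace

/-- The barycenter `∫ σ dQ(σ)` of a probability measure `Q` on `P(Y)`. -/
def barycenter {Y : Type*} [MeasurableSpace Y] (Q : ProbabilityMeasure (ProbabilityMeasure Y)) :
    ProbabilityMeasure Y :=
  ⟨(Q : Measure (ProbabilityMeasure Y)).bind fun σ => σ, isProbabilityMeasure_bind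
    measurable_subtype_coe.aemeasurable (ae_of_all _ fun σ => σ.2)⟩

section Measurable

variable {Y : Type*} [MeasurableSpace Y]

theorem coe_barycenter_map {X : Type*} [MeasurableSpace X] (μ : ProbabilityMeasure X)
    {κ : X → ProbabilityMeasure Y} (hκ : Measurable κ) :
    (barycenter (μ.map hκ.aemeasurable) : Measure Y) = (μ : Measure X).bind fun x => κ x :=
  congrArg Measure.join (Measure.map_map measurable_subtype_coe hκ)

theorem barycenter_diracP (ν : ProbabilityMeasure Y) : barycenter (diracP ν) = ν :=
  Subtype.ext (Measure.dirac_bind measurable_subtype_coe ν)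

theorem barycenter_mixture (Q₁ Q₂ : ProbabilityMeasure (ProbabilityMeasure Y)) {a b : ℝ≥0}
    (hab : a + b = 1) :
    barycenter (mixture Q₁ Q₂ hab) = mixture (barycenter Q₁) (barycenter Q₂) hab := by
  have h_add := Measure.comp_add (μ := a • (Q₁ : Measure (ProbabilityMeasure Y)))
    (ν := b • (Q₂ : Measure (ProbabilityMeasure Y)))
    (κ := (⟨fun σ => σ, measurable_subtype_coe⟩ : Kernel (ProbabilityMeasure Y) Y))
  rw [Measure.bind_smul, Measure.bind_smul] at h_add
  exact Subtype.ext h_add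

end Measurable

variable {Y : Type*} [TopologicalSpace Y] [CompactSpace Y] [MeasurableSpace Y] [BorelSpace Y]

theorem integral_barycenter (Q : ProbabilityMeasure (ProbabilityMeasure Y)) (g : C(Y, ℝ)) :
    ∫ y, g y ∂(barycenter Q : Measure Y)
      = ∫ σ, ∫ y, g y ∂(σ : Measure Y) ∂(Q : Measure (ProbabilityMeasure Y)) :=
  integral_bind measurable_subtype_coe (integrable_continuousMap g (barycenter Q : Measure Y))

variable [MetrizableSpace Y]

theorem continuous_barycenter : Continuous (barycenter (Y := Y)) := by
  refine isClosedEmbedding_integral_denseSeq.isInducing.continuous_iff.2 (continuous_pi fun n => ?_)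
  simp only [Function.comp_def, integral_barycenter]
  let φ : C(ProbabilityMeasure Y, ℝ) :=
    ⟨_, ProbabilityMeasure.continuous_integral_continuousMap (denseSeq C(Y, ℝ) n)⟩
  exact ProbabilityMeasure.continuous_integral_continuousMap φ

theorem ConvexOnProb.apply_barycenter_le_eint {f : ProbabilityMeasure Y → EReal}
    (hf : ConvexOnProb f) (hf_lsc : LowerSemicontinuous f) {m : ℝ} (hm : ∀ σ, (m : EReal) ≤ f σ)
    (Q : ProbabilityMeasure (ProbabilityMeasure Y)) :
    f (barycenter Q) ≤ eint (Q : Measure (ProbabilityMeasure Y)) f := by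
  refine EReal.ge_of_forall_gt_iff_ge.1 fun s hs => ?_
  obtain ⟨g, hg, hsg⟩ := exists_integral_le_and_lt hf hf_lsc hm hs
  have h_cont : Continuous fun σ : ProbabilityMeasure Y => ∫ y, g y ∂(σ : Measure Y) :=
    ProbabilityMeasure.continuous_integral_continuousMap g
  calc (s : EReal) ≤ ((∫ y, g y ∂(barycenter Q : Measure Y) : ℝ) : EReal) :=
        EReal.coe_le_coe_iff.2 hsg.le
    _ = eint (Q : Measure (ProbabilityMeasure Y)) fun σ =>
          ((∫ y, g y ∂(σ : Measure Y) : ℝ) : EReal) := by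
        rw [integral_barycenter, eint_coe h_cont.measurable
          (integrable_continuousMap ⟨_, h_cont⟩ _)]
    _ ≤ eint (Q : Measure (ProbabilityMeasure Y)) f := eint_mono hg

end Barycenter

section LiftedTransport

open TopologicalSpace

section Projections

variable {X Y : Type*} [MeasurableSpace X] [MeasurableSpace Y]

/-- The first marginal of a law `P` on `X × P(Y)`, and the barycenter of its second marginal. -/
def projections (P : ProbabilityMeasure (X × ProbabilityMeasure Y)) :
    ProbabilityMeasure X × ProbabilityMeasure Y :=
  (P.map measurable_fst.aemeasurable, barycenter (P.map measurable_snd.aemeasurable))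

/-- The relaxation of `weakTransport c` in which `x` may be sent to a random measure in `P(Y)`:
the least cost of a law on `X × P(Y)` with projections `μ` and `ν`. -/
def liftedTransport (c : X → ProbabilityMeasure Y → EReal) (μ : ProbabilityMeasure X)
    (ν : ProbabilityMeasure Y) : EReal :=
  ⨅ P ∈ projections ⁻¹' {(μ, ν)},
    eint (P : Measure (X × ProbabilityMeasure Y)) fun p => c p.1 p.2

theorem projections_prod_diracP (μ : ProbabilityMeasure X) (ν : ProbabilityMeasure Y) :
    projections (μ.prod (diracP ν)) = (μ, ν) := by
  rw [projections, ProbabilityMeasure.map_fst_prod, ProbabilityMeasure.map_snd_prod,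
    barycenter_diracP]

theorem projections_mixture (P₁ P₂ : ProbabilityMeasure (X × ProbabilityMeasure Y))
    {a b : ℝ≥0} (hab : a + b = 1) :
    projections (mixture P₁ P₂ hab) = (mixture (projections P₁).1 (projections P₂).1 hab,
      mixture (projections P₁).2 (projections P₂).2 hab) := by
  simp only [projections, map_mixture _ _ hab measurable_fst, map_mixture _ _ hab measurable_snd,
    barycenter_mixture]

theorem liftedTransport_le_weakTransport {c : X → ProbabilityMeasure Y → EReal}
    (hc : Measurable fun p : X × ProbabilityMeasure Y => c p.1 p.2) (μ : ProbabilityMeasure X)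
    (ν : ProbabilityMeasure Y) : liftedTransport c μ ν ≤ weakTransport c μ ν := by
  rw [weakTransport_eq_iInf_bind]
  refine le_iInf₂ fun κ ⟨hκ, hν⟩ => ?_
  have h_graph : Measurable fun x => (x, κ x) := measurable_id.prodMk hκ.subtype_mk
  let P := μ.map h_graph.aemeasurable
  have hP : P ∈ projections ⁻¹' {(μ, ν)} := by
    refine Prod.ext (Subtype.ext ?_) (Subtype.ext (Eq.trans ?_ hν))
    · exact (Measure.map_map measurable_fst h_graph).trans Measure.map_id
    · have h_snd : P.map measurable_snd.aemeasurable = μ.map (f := κ) hκ.subtype_mk.aemeasurable :=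
        Subtype.ext (Measure.map_map measurable_snd h_graph)
      exact (congrArg (fun Q => (barycenter Q : Measure Y)) h_snd).trans
        (coe_barycenter_map μ hκ.subtype_mk)
  refine (biInf_le _ hP).trans_eq (eint_map h_graph hc)

theorem le_liftedTransport {c : X → ProbabilityMeasure Y → EReal} {m : ℝ}
    (hm : ∀ x σ, (m : EReal) ≤ c x σ) (μ : ProbabilityMeasure X)
    (ν : ProbabilityMeasure Y) : (m : EReal) ≤ liftedTransport c μ ν :=
  le_iInf₂ fun _ _ => le_eint fun p => hm p.1 p.2

end Projections

variable {X Y : Type*} [TopologicalSpace X] [MeasurableSpace X] [BorelSpace X]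
  [TopologicalSpace Y] [CompactSpace Y] [MetrizableSpace Y] [MeasurableSpace Y] [BorelSpace Y]

theorem continuous_projections : Continuous (projections (X := X) (Y := Y)) :=
  (ProbabilityMeasure.continuous_map continuous_fst).prodMk
    (continuous_barycenter.comp (ProbabilityMeasure.continuous_map continuous_snd))

variable [CompactSpace X] [MetrizableSpace X] {c : X → ProbabilityMeasure Y → EReal} {m : ℝ}

theorem lowerSemicontinuous_liftedTransport
    (hc : LowerSemicontinuous fun p : X × ProbabilityMeasure Y => c p.1 p.2)
    (hm : ∀ x σ, (m : EReal) ≤ c x σ) :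
    LowerSemicontinuous fun p : ProbabilityMeasure X × ProbabilityMeasure Y =>
      liftedTransport c p.1 p.2 :=
  lowerSemicontinuous_biInf_fiber continuous_projections
    (lowerSemicontinuous_eint hc fun p => hm p.1 p.2)

theorem exists_eq_liftedTransport
    (hc : LowerSemicontinuous fun p : X × ProbabilityMeasure Y => c p.1 p.2)
    (hm : ∀ x σ, (m : EReal) ≤ c x σ) (μ : ProbabilityMeasure X) (ν : ProbabilityMeasure Y) :
    ∃ P : ProbabilityMeasure (X × ProbabilityMeasure Y), projections P = (μ, ν) ∧
      eint (P : Measure (X × ProbabilityMeasure Y)) (fun p => c p.1 p.2)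
        = liftedTransport c μ ν :=
  exists_eq_biInf_of_isCompact (lowerSemicontinuous_eint hc fun p => hm p.1 p.2)
    (isClosed_singleton.preimage continuous_projections).isCompact
    ⟨_, projections_prod_diracP μ ν⟩

theorem convexOnProb_liftedTransport
    (hc : LowerSemicontinuous fun p : X × ProbabilityMeasure Y => c p.1 p.2)
    (hm : ∀ x σ, (m : EReal) ≤ c x σ) (μ : ProbabilityMeasure X) :
    ConvexOnProb (liftedTransport c μ) := by
  intro σ₁ σ₂ τ a b hab hτ
  obtain ⟨P₁, hP₁, h₁⟩ := exists_eq_liftedTransport hc hm μ σ₁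
  obtain ⟨P₂, hP₂, h₂⟩ := exists_eq_liftedTransport hc hm μ σ₂
  have hP : mixture P₁ P₂ hab ∈ projections ⁻¹' {(μ, τ)} := by
    rw [mem_preimage, projections_mixture, hP₁, hP₂, mixture_self]
    exact congrArg (Prod.mk μ) (Subtype.ext hτ.symm)
  have h_eint := eint_mixture (μ := (mixture P₁ P₂ hab : Measure (X × ProbabilityMeasure Y)))
    hab rfl hc.measurable fun p => hm p.1 p.2
  rw [← h₁, ← h₂, ← h_eint]
  exact biInf_le _ hP

theorem exists_bind_eq_eint_le_of_projections
    (hc : LowerSemicontinuous fun p : X × ProbabilityMeasure Y => c p.1 p.2)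
    (hm : ∀ x σ, (m : EReal) ≤ c x σ) (hc_conv : ∀ x, ConvexOnProb (c x))
    {P : ProbabilityMeasure (X × ProbabilityMeasure Y)} {μ : ProbabilityMeasure X}
    {ν : ProbabilityMeasure Y} (hP : projections P = (μ, ν)) :
    ∃ κ : X → ProbabilityMeasure Y, Measurable (fun x => (κ x : Measure Y)) ∧
      (μ : Measure X).bind (fun x => κ x) = (ν : Measure Y) ∧
      eint (μ : Measure X) (fun x => c x (κ x))
        ≤ eint (P : Measure (X × ProbabilityMeasure Y)) fun p => c p.1 p.2 := by
  let _ := metrizableSpaceMetric (ProbabilityMeasure Y)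
  have : Nonempty (ProbabilityMeasure Y) := ⟨ν⟩
  let K := (P : Measure (X × ProbabilityMeasure Y)).condKernel
  let κ : X → ProbabilityMeasure Y := fun x => barycenter ⟨K x, inferInstance⟩
  have hμ : (P : Measure (X × ProbabilityMeasure Y)).fst = μ :=
    congrArg (fun q => (q.1 : Measure X)) hP
  have hPK : (μ : Measure X) ⊗ₘ K = P := hμ ▸ (P : Measure _).disintegrate K
  refine ⟨κ, (Measure.measurable_bind' measurable_subtype_coe).comp K.measurable, ?_, ?_⟩
  · calc (μ : Measure X).bind (fun x => κ x)
        = ((μ : Measure X).bind K).bind fun σ => (σ : Measure Y) :=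
          (Measure.bind_bind K.measurable.aemeasurable measurable_subtype_coe.aemeasurable).symm
      _ = (barycenter (P.map measurable_snd.aemeasurable) : Measure Y) := by
          rw [← Measure.snd_compProd, hPK]; rfl
      _ = ν := congrArg (fun q => (q.2 : Measure Y)) hP
  · rw [← hPK, eint_compProd hc.measurable fun p => hm p.1 p.2]
    exact eint_mono fun x => (hc_conv x).apply_barycenter_le_eint
      (lowerSemicontinuous_section hc x) (hm x) ⟨K x, inferInstance⟩

theorem liftedTransport_eq_weakTransport
    (hc : LowerSemicontinuous fun p : X × ProbabilityMeasure Y => c p.1 p.2)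
    (hm : ∀ x σ, (m : EReal) ≤ c x σ) (hc_conv : ∀ x, ConvexOnProb (c x)) :
    liftedTransport c = weakTransport c := by
  ext μ ν
  obtain ⟨P, hP, hP_eq⟩ := exists_eq_liftedTransport hc hm μ ν
  obtain ⟨κ, hκ, hν, h_le⟩ := exists_bind_eq_eint_le_of_projections hc hm hc_conv hP
  exact (liftedTransport_le_weakTransport hc.measurable μ ν).antisymm <|
    (weakTransport_le_eint c hκ hν).trans (h_le.trans_eq hP_eq)

theorem exists_eint_eq_weakTransport
    (hc : LowerSemicontinuous fun p : X × ProbabilityMeasure Y => c p.1 p.2)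
    (hm : ∀ x σ, (m : EReal) ≤ c x σ) (hc_conv : ∀ x, ConvexOnProb (c x))
    (μ : ProbabilityMeasure X) (ν : ProbabilityMeasure Y) :
    ∃ (π : ProbabilityMeasure (X × Y)) (κ : X → ProbabilityMeasure Y), IsCoupling π μ ν ∧
      IsDisintegration π μ κ ∧ eint (μ : Measure X) (fun x => c x (κ x)) = weakTransport c μ ν := by
  obtain ⟨P, hP, hP_eq⟩ := exists_eq_liftedTransport hc hm μ ν
  obtain ⟨κ, hκ, hν, h_le⟩ := exists_bind_eq_eint_le_of_projections hc hm hc_conv hP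
  rw [hP_eq, liftedTransport_eq_weakTransport hc hm hc_conv] at h_le
  exact ⟨planOf μ κ hκ, κ, isCoupling_planOf hκ hν, isDisintegration_planOf μ hκ,
    h_le.antisymm (weakTransport_le_eint c hκ hν)⟩

end LiftedTransport

section Transfer

open TopologicalSpace

variable {X Y : Type*} [TopologicalSpace X] [MeasurableSpace X] [BorelSpace X]
  [TopologicalSpace Y] [MeasurableSpace Y] [BorelSpace Y]
  {𝒯 : ProbabilityMeasure X → ProbabilityMeasure Y → EReal}

theorem IsBLT.convexOnProb (h𝒯 : IsBLT 𝒯) (μ : ProbabilityMeasure X) : ConvexOnProb (𝒯 μ) :=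
  fun σ₁ σ₂ τ a b hab hτ => h𝒯.2.2.2.1 μ μ σ₁ σ₂ μ τ a b hab
    (by rw [← add_smul, hab, one_smul]) hτ

theorem IsBLT.lowerSemicontinuous_cost (h𝒯 : IsBLT 𝒯) :
    LowerSemicontinuous fun p : X × ProbabilityMeasure Y => 𝒯 (diracP p.1) p.2 :=
  h𝒯.2.2.2.2.1.comp ((continuous_diracProba.comp continuous_fst).prodMk continuous_snd)

variable [CompactSpace X] [MetrizableSpace X] [CompactSpace Y] [MetrizableSpace Y]

theorem IsBLT.eq_weakTransport (h𝒯 : IsBLT 𝒯) :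
    𝒯 = weakTransport fun x σ => 𝒯 (diracP x) σ := by
  have hc := h𝒯.lowerSemicontinuous_cost
  have h_conv := h𝒯.convexOnProb
  obtain ⟨-, -, ⟨m, hm⟩, -, h_lsc, h_legendre⟩ := h𝒯
  set c : X → ProbabilityMeasure Y → EReal := fun x σ => 𝒯 (diracP x) σ
  have hc_m : ∀ x σ, (m : EReal) ≤ c x σ := fun x => hm (diracP x)
  have h_lifted : liftedTransport c = weakTransport c :=
    liftedTransport_eq_weakTransport hc hc_m fun x => h_conv (diracP x)
  funext μ
  have h_conjugate : ∀ g : C(Y, ℝ),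
      (⨆ ν : ProbabilityMeasure Y, ((∫ y, g y ∂(ν : Measure Y) : ℝ) : EReal) - 𝒯 μ ν)
        = ⨆ ν : ProbabilityMeasure Y,
          ((∫ y, g y ∂(ν : Measure Y) : ℝ) : EReal) - liftedTransport c μ ν := fun g =>
    (h_legendre μ g).trans (h_lifted ▸ iSup_sub_weakTransport hc hc_m μ g).symm
  rw [← h_lifted]
  refine le_antisymm ?_ ?_
  · exact le_of_forall_iSup_sub_le (h_conv μ) (lowerSemicontinuous_section h_lsc μ) (hm μ)
      fun g => (h_conjugate g).ge
  · exact le_of_forall_iSup_sub_le (convexOnProb_liftedTransport hc hc_m μ)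
      (lowerSemicontinuous_section (lowerSemicontinuous_liftedTransport hc hc_m) μ)
      (le_liftedTransport hc_m μ) fun g => (h_conjugate g).le

theorem IsBLT.exists_coupling_eq_eint (h𝒯 : IsBLT 𝒯) {μ : ProbabilityMeasure X}
    {ν : ProbabilityMeasure Y} (h_fin : 𝒯 μ ν ≠ ⊤) :
    ∃ (π : ProbabilityMeasure (X × Y)) (κ : X → ProbabilityMeasure Y),
      IsCoupling π μ ν ∧ IsDisintegration π μ κ ∧
      (∀ᵐ x ∂(μ : Measure X), 𝒯 (diracP x) (κ x) ≠ ⊤) ∧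
      𝒯 μ ν = eint (μ : Measure X) (fun x => 𝒯 (diracP x) (κ x)) := by
  have hc := h𝒯.lowerSemicontinuous_cost
  obtain ⟨m, hm⟩ := h𝒯.2.2.1
  obtain ⟨π, κ, hπ, hκ, h_eint⟩ := exists_eint_eq_weakTransport hc (fun x => hm (diracP x))
    (fun x => h𝒯.convexOnProb (diracP x)) μ ν
  have h_opt : 𝒯 μ ν = eint (μ : Measure X) (fun x => 𝒯 (diracP x) (κ x)) :=
    (congrFun₂ h𝒯.eq_weakTransport μ ν).trans h_eint.symm
  exact ⟨π, κ, hπ, hκ, ae_ne_top_of_eint_ne_top (measurable_cost_comp hc hκ.1.subtype_mk)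
    (fun x => hm (diracP x) (κ x)) (h_opt ▸ h_fin), h_opt⟩

end Transfer

theorem blt_eq_weakTransport_general
    {X Y : Type*} [TopologicalSpace X] [CompactSpace X] [TopologicalSpace.MetrizableSpace X]
    [MeasurableSpace X] [BorelSpace X] [TopologicalSpace Y] [CompactSpace Y]
    [TopologicalSpace.MetrizableSpace Y] [MeasurableSpace Y] [BorelSpace Y] :
    (∀ c : X → ProbabilityMeasure Y → EReal,
      (∃ m : ℝ, ∀ x σ, (m : EReal) ≤ c x σ) →
      LowerSemicontinuous (fun p : X × ProbabilityMeasure Y => c p.1 p.2) →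
      ∀ (μ : ProbabilityMeasure X) (g : C(Y, ℝ)),
        (⨆ ν : ProbabilityMeasure Y,
          (((∫ y, g y ∂(ν : Measure Y)) : ℝ) : EReal) - weakTransport c μ ν)
          = eint (μ : Measure X) (costOp c g)) ∧
    (∀ 𝒯 : ProbabilityMeasure X → ProbabilityMeasure Y → EReal, IsBLT 𝒯 →
      (∀ (μ : ProbabilityMeasure X) (ν : ProbabilityMeasure Y),
        𝒯 μ ν = weakTransport (fun x σ => 𝒯 (diracP x) σ) μ ν) ∧
      (∀ (μ : ProbabilityMeasure X) (ν : ProbabilityMeasure Y), 𝒯 μ ν ≠ ⊤ →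
        ∃ (π : ProbabilityMeasure (X × Y)) (κ : X → ProbabilityMeasure Y),
          IsCoupling π μ ν ∧ IsDisintegration π μ κ ∧
          (∀ᵐ x ∂(μ : Measure X), 𝒯 (diracP x) (κ x) ≠ ⊤) ∧
          𝒯 μ ν = eint (μ : Measure X) (fun x => 𝒯 (diracP x) (κ x)))) :=
  ⟨fun _ ⟨_, hm⟩ hc => iSup_sub_weakTransport hc hm,
    fun _ h𝒯 => ⟨fun μ ν => congrFun₂ h𝒯.eq_weakTransport μ ν,
      fun _ _ => h𝒯.exists_coupling_eq_eint⟩⟩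

/-- **Representation of backward linear transfers as optimal weak transports.**
(i) The optimal weak transport associated to a convex lower semicontinuous cost
is a backward linear transfer whose Kantorovich operator is `T⁻`;
(ii) conversely, every standard backward linear transfer is the optimal weak
transport for the cost `c(x,σ) = 𝒯(δ_x,σ)`, with an attained optimal plan. -/
theorem blt_eq_weakTransport
    {X Y : Type*} [MetricSpace X] [CompactSpace X] [MeasurableSpace X] [BorelSpace X]
    [MetricSpace Y] [CompactSpace Y] [MeasurableSpace Y] [BorelSpace Y] :
    (∀ c : X → ProbabilityMeasure Y → EReal,
      (∀ x σ, c x σ ≠ ⊥) →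
      (∃ m : ℝ, ∀ x σ, (m : EReal) ≤ c x σ) →
      (∀ x, ∃ σ, c x σ ≠ ⊤) →
      LowerSemicontinuous (fun p : X × ProbabilityMeasure Y => c p.1 p.2) →
      (∀ (x : X) (σ₁ σ₂ τ : ProbabilityMeasure Y) (a b : ℝ≥0), a + b = 1 →
        (τ : Measure Y) = a • (σ₁ : Measure Y) + b • (σ₂ : Measure Y) →
        c x τ ≤ ((a : ℝ) : EReal) * c x σ₁ + ((b : ℝ) : EReal) * c x σ₂) →
      ∀ (μ : ProbabilityMeasure X) (g : C(Y, ℝ)),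
        (⨆ ν : ProbabilityMeasure Y,
          (((∫ y, g y ∂(ν : Measure Y)) : ℝ) : EReal) - weakTransport c μ ν)
          = eint (μ : Measure X) (costOp c g)) ∧
    (∀ 𝒯 : ProbabilityMeasure X → ProbabilityMeasure Y → EReal,
      IsBLT 𝒯 → IsStandardT 𝒯 →
      (∀ (μ : ProbabilityMeasure X) (ν : ProbabilityMeasure Y),
        𝒯 μ ν = weakTransport (fun x σ => 𝒯 (diracP x) σ) μ ν) ∧
      (∀ (μ : ProbabilityMeasure X) (ν : ProbabilityMeasure Y), 𝒯 μ ν ≠ ⊤ →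
        ∃ (π : ProbabilityMeasure (X × Y)) (κ : X → ProbabilityMeasure Y),
          IsCoupling π μ ν ∧ IsDisintegration π μ κ ∧
          (∀ᵐ x ∂(μ : Measure X), 𝒯 (diracP x) (κ x) ≠ ⊤) ∧
          𝒯 μ ν = eint (μ : Measure X) (fun x => 𝒯 (diracP x) (κ x)))) :=
  ⟨fun c _ hm _ hc _ => blt_eq_weakTransport_general.1 c hm hc,
    fun 𝒯 h𝒯 _ => blt_eq_weakTransport_general.2 𝒯 h𝒯⟩
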